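/- arXiv:1601.04224 — 2 statements merged into one kernel-verified Lean document; each statement's English description precedes it below -/
import Mathlib

section
/- The effective domain of Λ* is exactly the open disk B_R: for y ∈ ℝ², Λ*(y) < ∞ if and only if ‖y‖ < R. -/
open MeasureTheory Set Filter Topology
open scoped ENNReal RealInnerProductSpace

noncomputable section

/-- The Euclidean plane. -/
abbrev E2 := EuclideanSpace ℝ (Fin 2)

/-- The uniform probability measure on a set `A` (normalized Lebesgue measure). -/
def uniformOn {α : Type*} [MeasureSpace α] (A : Set α) : Measure α :=
  (volume A)⁻¹ • volume.restrict A

/-- The logarithmic moment generating function `Λ` of the uniform probability measure on the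
open disk of radius `R` centered at the origin. -/
def logMGF (R : ℝ) (η : E2) : ℝ :=
  Real.log (∫ x, Real.exp (⟪x, η⟫) ∂(uniformOn (Metric.ball (0 : E2) R)))

/-- The Fenchel–Legendre transform `Λ*` of `logMGF R`, valued in `[0,∞]`.  Since the supremum
includes `η = 0` (where the value is `0`), truncating negative values does not change it. -/
def lambdaStar (R : ℝ) (y : E2) : ℝ≥0∞ :=
  ⨆ η : E2, ENNReal.ofReal (⟪y, η⟫ - logMGF R η)

lemma ae_mem_uniformOn {α : Type*} [MeasureSpace α] {A : Set α} (hA : MeasurableSet A) :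
    ∀ᵐ x ∂(uniformOn A), x ∈ A :=
  Measure.ae_smul_measure (ae_restrict_mem hA) _

lemma isProbabilityMeasure_uniformOn_ball {R : ℝ} (hR : 0 < R) :
    IsProbabilityMeasure (uniformOn (Metric.ball (0 : E2) R)) := by
  constructor
  simp only [uniformOn, Measure.smul_apply, Measure.restrict_apply_univ, smul_eq_mul]
  exact ENNReal.inv_mul_cancel (Metric.measure_ball_pos volume _ hR).ne' measure_ball_lt_top.ne

lemma integrable_exp_inner_uniformOn_ball {R : ℝ} (hR : 0 < R) (η : E2) :
    Integrable (fun x => Real.exp ⟪x, η⟫) (uniformOn (Metric.ball (0 : E2) R)) := by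
  have := isProbabilityMeasure_uniformOn_ball hR
  refine Integrable.of_bound (by fun_prop) (Real.exp (R * ‖η‖)) ?_
  filter_upwards [ae_mem_uniformOn measurableSet_ball] with x hx
  rw [Real.norm_eq_abs, Real.abs_exp, Real.exp_le_exp]
  have hx' : ‖x‖ ≤ R := (mem_ball_zero_iff.1 hx).le
  exact (real_inner_le_norm x η).trans (by gcongr)

/-- The mean of `exp ⟪·, η⟫` over a ball is at least its value at the center. -/
lemma measureReal_mul_exp_le_setIntegral_ball (y η : E2) (r : ℝ) :
    volume.real (Metric.ball y r) * Real.exp ⟪y, η⟫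
      ≤ ∫ x in Metric.ball y r, Real.exp ⟪x, η⟫ := by
  have hint : ∀ f : E2 → ℝ, Continuous f → IntegrableOn f (Metric.ball y r) := fun f hf =>
    (hf.continuousOn.integrableOn_compact (isCompact_closedBall y r)).mono_set
      Metric.ball_subset_closedBall
  have hzero : ∫ x in Metric.ball y r, ⟪x - y, η⟫ = 0 := by
    have hrefl : ∫ x in Metric.ball y r, ⟪x - y, η⟫ = -∫ x in Metric.ball y r, ⟪x - y, η⟫ := by
      rw [← integral_neg, ← integral_indicator measurableSet_ball,
        ← integral_indicator measurableSet_ball,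
        ← integral_sub_left_eq_self _ volume (y + y)]
      congr 1 with x
      have hx : y + y - x - y = -(x - y) := by abel
      simp only [indicator, mem_ball_iff_norm, hx, norm_neg, inner_neg_left]
    linarith
  calc volume.real (Metric.ball y r) * Real.exp ⟪y, η⟫
      = ∫ x in Metric.ball y r, Real.exp ⟪y, η⟫ * (⟪x - y, η⟫ + 1) := by
        rw [integral_const_mul, integral_add (hint _ (by fun_prop)) (hint _ (by fun_prop)), hzero]
        simp [mul_comm]
    _ ≤ _ := by
        refine setIntegral_mono (hint _ (by fun_prop)) (hint _ (by fun_prop)) fun x => ?_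
        calc Real.exp ⟪y, η⟫ * (⟪x - y, η⟫ + 1)
            ≤ Real.exp ⟪y, η⟫ * Real.exp ⟪x - y, η⟫ := by
              gcongr
              exact Real.add_one_le_exp _
          _ = Real.exp ⟪x, η⟫ := by rw [← Real.exp_add, ← inner_add_left]; simp

lemma inner_sub_logMGF_le {R : ℝ} {y : E2} (hy : ‖y‖ < R) (η : E2) :
    ⟪y, η⟫ - logMGF R η ≤
      -Real.log ((volume.real (Metric.ball (0 : E2) R))⁻¹ *
        volume.real (Metric.ball y (R - ‖y‖))) := by
  have hR : 0 < R := (norm_nonneg y).trans_lt hy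
  have hpos : ∀ (z : E2) {s : ℝ}, 0 < s → 0 < volume.real (Metric.ball z s) := fun z s hs =>
    ENNReal.toReal_pos (Metric.measure_ball_pos volume _ hs).ne' measure_ball_lt_top.ne
  have hV := hpos 0 hR
  have hv := hpos y (sub_pos.2 hy)
  have hsub : Metric.ball y (R - ‖y‖) ⊆ Metric.ball 0 R :=
    Metric.ball_subset_ball' (by simp)
  have hint : IntegrableOn (fun x : E2 => Real.exp ⟪x, η⟫) (Metric.ball 0 R) :=
    (Continuous.continuousOn (by fun_prop)).integrableOn_compact (isCompact_closedBall 0 R)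
      |>.mono_set Metric.ball_subset_closedBall
  have hle : (volume.real (Metric.ball (0 : E2) R))⁻¹ *
      volume.real (Metric.ball y (R - ‖y‖)) * Real.exp ⟪y, η⟫ ≤
      ∫ x, Real.exp ⟪x, η⟫ ∂(uniformOn (Metric.ball (0 : E2) R)) := by
    rw [uniformOn, integral_smul_measure, ENNReal.toReal_inv, smul_eq_mul, mul_assoc]
    refine mul_le_mul_of_nonneg_left ?_ (inv_nonneg.2 ENNReal.toReal_nonneg)
    exact (measureReal_mul_exp_le_setIntegral_ball y η _).trans
      (setIntegral_mono_set hint (ae_of_all _ fun x => (Real.exp_pos _).le) hsub.eventuallyLE)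
  have hlog := Real.log_le_log (by positivity) hle
  rw [Real.log_mul (by positivity) (by positivity), Real.log_exp] at hlog
  rw [logMGF]
  linarith

lemma tendsto_inner_smul_sub_logMGF_atTop {R : ℝ} (hR : 0 < R) {y : E2} (hy : R ≤ ‖y‖) :
    Tendsto (fun t : ℝ => ⟪y, t • y⟫ - logMGF R (t • y)) atTop atTop := by
  have := isProbabilityMeasure_uniformOn_ball hR
  set μ := uniformOn (Metric.ball (0 : E2) R)
  have hmem : ∀ᵐ x ∂μ, x ∈ Metric.ball (0 : E2) R := ae_mem_uniformOn measurableSet_ball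
  have hneg : ∀ x ∈ Metric.ball (0 : E2) R, ⟪x - y, y⟫ < 0 := fun x hx => by
    rw [mem_ball_zero_iff] at hx
    rw [inner_sub_left, real_inner_self_eq_norm_mul_norm, sub_neg]
    exact (real_inner_le_norm x y).trans_lt
      (mul_lt_mul_of_pos_right (hx.trans_le hy) (hR.trans_le hy))
  have hexp : ∀ t : ℝ, ∀ x : E2, Real.exp (t * ⟪x - y, y⟫) =
      Real.exp (-⟪y, t • y⟫) * Real.exp ⟪x, t • y⟫ := fun t x => by
    rw [← Real.exp_add, inner_sub_left, inner_smul_right, inner_smul_right]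
    ring_nf
  have hpos : ∀ t : ℝ, 0 < ∫ x, Real.exp ⟪x, t • y⟫ ∂μ := fun t =>
    integral_exp_pos (integrable_exp_inner_uniformOn_ball hR _)
  have hlim : Tendsto (fun t : ℝ => ∫ x, Real.exp (t * ⟪x - y, y⟫) ∂μ) atTop (𝓝 0) := by
    rw [← integral_zero E2 ℝ (μ := μ)]
    refine tendsto_integral_filter_of_dominated_convergence (fun _ => 1)
      (Eventually.of_forall fun t => by fun_prop) ?_ (integrable_const 1) ?_
    · filter_upwards [eventually_ge_atTop 0] with t ht
      filter_upwards [hmem] with x hx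
      rw [Real.norm_eq_abs, Real.abs_exp, Real.exp_le_one_iff]
      exact mul_nonpos_of_nonneg_of_nonpos ht (hneg x hx).le
    · filter_upwards [hmem] with x hx
      exact Real.tendsto_exp_atBot.comp (tendsto_id.atTop_mul_const_of_neg (hneg x hx))
  simp only [hexp, integral_const_mul] at hlim
  have hlog := tendsto_neg_atBot_atTop.comp (Real.tendsto_log_nhdsGT_zero.comp
    (tendsto_nhdsWithin_iff.2 ⟨hlim, Eventually.of_forall fun t =>
      mul_pos (Real.exp_pos _) (hpos t)⟩))
  refine hlog.congr fun t => ?_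
  simp only [Function.comp_apply]
  rw [Real.log_mul (Real.exp_pos _).ne' (hpos t).ne', Real.log_exp, logMGF]
  ring

/-- The effective domain of `Λ*` is exactly the open disk of radius `R`. -/
theorem statement4 (R : ℝ) (hR : 0 < R) (y : E2) :
    lambdaStar R y < ⊤ ↔ ‖y‖ < R := by
  refine ⟨fun h => ?_, fun hy => ?_⟩
  · by_contra! hy
    refine h.ne (top_le_iff.1 ?_)
    exact le_of_tendsto
      (ENNReal.tendsto_ofReal_atTop.comp (tendsto_inner_smul_sub_logMGF_atTop hR hy))
      (Eventually.of_forall fun t =>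
        le_iSup (fun η : E2 => ENNReal.ofReal (⟪y, η⟫ - logMGF R η)) (t • y))
  · exact (iSup_le fun η => ENNReal.ofReal_le_ofReal (inner_sub_logMGF_le hy η)).trans_lt
      ENNReal.ofReal_lt_top
end
end

section
/- The function I_E : C([0,1],ℝ²) → [0,∞] defined by I_E(φ) = ∫₀¹ Λ*(φ'(t)) dt if φ is absolutely continuous with φ(0) ∈ cl E, and I_E(φ) = ∞ otherwise, is a good rate function on C([0,1],ℝ²) with the sup metric: it is lower semicontinuous and for every α ∈ [0,∞) the sublevel set {φ : I_E(φ) ≤ α} is compact. -/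
open MeasureTheory Set Filter Topology
open scoped ENNReal RealInnerProductSpace

noncomputable section

/-- The unit interval `[0,1]` as a subset of `ℝ`. -/
abbrev I01 : Set ℝ := Set.Icc 0 1

/-- The space `C([0,1], ℝ²)` of continuous paths, with the sup metric. -/
abbrev PathSp := C(I01, E2)

instance : MeasurableSpace PathSp := borel PathSp
instance : BorelSpace PathSp := ⟨rfl⟩

def pt0 : I01 := ⟨0, Set.left_mem_Icc.mpr zero_le_one⟩
def pt1 : I01 := ⟨1, Set.right_mem_Icc.mpr zero_le_one⟩

/-- `g` is an (integrable) a.e.-derivative representation of the path `φ`: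
`φ(t) = φ(0) + ∫₀ᵗ g(s) ds` on `[0,1]`.  A path is absolutely continuous iff it admits such a
representation, and any two representations agree a.e. on `[0,1]`. -/
def Represents (φ : PathSp) (g : ℝ → E2) : Prop :=
  IntegrableOn g I01 volume ∧ ∀ t : I01, (φ t : E2) = φ pt0 + ∫ s in (0:ℝ)..(t : ℝ), g s

/-- The rate function `I_E(φ) = ∫₀¹ Λ*(φ'(t)) dt` if `φ` is absolutely continuous with
`φ(0) ∈ cl E`, and `∞` otherwise.  (All derivative representations of a given `φ` yield the
same integral, so the infimum below is the common value; it is `∞` when no representation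
exists, i.e. when `φ` is not absolutely continuous or `φ(0) ∉ cl E`.) -/
def rateFun (R : ℝ) (E : Set E2) (φ : PathSp) : ℝ≥0∞ :=
  ⨅ (g : ℝ → E2) (_ : Represents φ g ∧ (φ pt0 : E2) ∈ closure E),
    ∫⁻ t in I01, lambdaStar R (g t)


lemma logMGF_le {R : ℝ} (hR : 0 < R) (η : E2) : logMGF R η ≤ R * ‖η‖ := by
  have hμ : IsProbabilityMeasure (uniformOn (Metric.ball (0 : E2) R)) := by
    constructor
    have h0 : volume (Metric.ball (0 : E2) R) ≠ 0 := (Metric.measure_ball_pos volume _ hR).ne'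
    rw [uniformOn, Measure.smul_apply, Measure.restrict_apply_univ, smul_eq_mul,
      ENNReal.inv_mul_cancel h0 measure_ball_lt_top.ne]
  have hball : ∀ᵐ x ∂(uniformOn (Metric.ball (0 : E2) R)), x ∈ Metric.ball (0 : E2) R :=
    Measure.ae_smul_measure (ae_restrict_mem Metric.isOpen_ball.measurableSet) _
  have hbound := norm_integral_le_of_norm_le_const (f := fun x : E2 ↦ Real.exp ⟪x, η⟫)
    (C := Real.exp (R * ‖η‖)) (μ := uniformOn (Metric.ball (0 : E2) R)) <| by
      filter_upwards [hball] with x hx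
      rw [Real.norm_of_nonneg (Real.exp_pos _).le, Real.exp_le_exp]
      have hx' : ‖x‖ < R := by simpa using hx
      exact (real_inner_le_norm x η).trans (by gcongr)
  rw [probReal_univ, mul_one] at hbound
  have hle := (le_abs_self _).trans hbound
  have hnonneg : 0 ≤ ∫ x, Real.exp ⟪x, η⟫ ∂(uniformOn (Metric.ball (0 : E2) R)) :=
    integral_nonneg fun x ↦ (Real.exp_pos _).le
  rcases hnonneg.eq_or_lt with h | h
  · rw [logMGF, ← h, Real.log_zero]
    positivity
  · exact (Real.log_le_iff_le_exp h).2 hle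

lemma norm_le_of_lambdaStar_ne_top {R : ℝ} (hR : 0 < R) {y : E2} (hy : lambdaStar R y ≠ ∞) :
    ‖y‖ ≤ R := by
  by_contra! hlt
  have hpos : 0 < ‖y‖ * (‖y‖ - R) := mul_pos (hR.trans hlt) (sub_pos.2 hlt)
  refine hy (ENNReal.eq_top_of_forall_nnreal_le fun r ↦ ?_)
  set k : ℝ := r / (‖y‖ * (‖y‖ - R)) with hk
  have hk0 : 0 ≤ k := by positivity
  refine le_trans ?_ (le_iSup (fun η : E2 ↦ ENNReal.ofReal (⟪y, η⟫ - logMGF R η)) (k • y))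
  rw [← ENNReal.ofReal_coe_nnreal]
  apply ENNReal.ofReal_le_ofReal
  have h1 := logMGF_le hR (k • y)
  rw [norm_smul, Real.norm_of_nonneg hk0] at h1
  rw [real_inner_smul_right, real_inner_self_eq_norm_sq]
  have h2 : k * (‖y‖ * (‖y‖ - R)) = r := div_mul_cancel₀ _ hpos.ne'
  nlinarith

lemma lowerSemicontinuous_lambdaStar (R : ℝ) : LowerSemicontinuous (lambdaStar R) :=
  lowerSemicontinuous_iSup fun _ ↦ Continuous.lowerSemicontinuous <|
    ENNReal.continuous_ofReal.comp (by fun_prop)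

lemma measurable_lambdaStar (R : ℝ) : Measurable (lambdaStar R) :=
  (lowerSemicontinuous_lambdaStar R).measurable

lemma ofReal_integral_le_lintegral_ofReal {α : Type*} [MeasurableSpace α] {μ : Measure α}
    {f : α → ℝ} (hf : Integrable f μ) :
    ENNReal.ofReal (∫ x, f x ∂μ) ≤ ∫⁻ x, ENNReal.ofReal (f x) ∂μ := by
  have hpos : Integrable (fun x ↦ max (f x) 0) μ := hf.pos_part
  calc ENNReal.ofReal (∫ x, f x ∂μ)
      ≤ ENNReal.ofReal (∫ x, max (f x) 0 ∂μ) :=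
        ENNReal.ofReal_le_ofReal (integral_mono hf hpos fun x ↦ le_max_left _ _)
    _ = ∫⁻ x, ENNReal.ofReal (max (f x) 0) ∂μ :=
        ofReal_integral_eq_lintegral_ofReal hpos (ae_of_all _ fun x ↦ le_max_right _ _)
    _ = ∫⁻ x, ENNReal.ofReal (f x) ∂μ := by simp [ENNReal.ofReal_max]

/-- Jensen's inequality for `lambdaStar`. -/
lemma lambdaStar_integral_le (R : ℝ) {α : Type*} [MeasurableSpace α] {μ : Measure α}
    [IsProbabilityMeasure μ] {g : α → E2} (hg : Integrable g μ) :
    lambdaStar R (∫ x, g x ∂μ) ≤ ∫⁻ x, lambdaStar R (g x) ∂μ := by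
  refine iSup_le fun η ↦ ?_
  have hinner : Integrable (fun x ↦ ⟪g x, η⟫) μ := hg.inner_const η
  have hint : ∫ x, (⟪g x, η⟫ - logMGF R η) ∂μ = ⟪∫ x, g x ∂μ, η⟫ - logMGF R η := by
    rw [integral_sub hinner (integrable_const _), integral_const, probReal_univ, one_smul,
      real_inner_comm, ← integral_inner hg]
    simp only [real_inner_comm]
  rw [← hint]
  exact (ofReal_integral_le_lintegral_ofReal (hinner.sub (integrable_const _))).trans
    (lintegral_mono fun x ↦ le_iSup (fun η : E2 ↦ ENNReal.ofReal (⟪g x, η⟫ - logMGF R η)) η)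

/-- The average of a nonnegative function over all windows of length `h` inside `[0,1]` is at
most its integral. -/
lemma lintegral_lintegral_window_le {F : ℝ → ℝ≥0∞} (hF : AEMeasurable F (volume.restrict I01))
    (h : ℝ) :
    ∫⁻ t in Icc 0 (1 - h), ∫⁻ s in Ioc t (t + h), F s ≤ ENNReal.ofReal h * ∫⁻ t in I01, F t := by
  set G := hF.mk F
  have hG : Measurable G := hF.measurable_mk
  calc ∫⁻ t in Icc 0 (1 - h), ∫⁻ s in Ioc t (t + h), F s
      = ∫⁻ t in Icc 0 (1 - h), ∫⁻ s in Ioc 0 h, G (t + s) := by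
        refine setLIntegral_congr_fun measurableSet_Icc fun t ht ↦ ?_
        have hsub : Ioc t (t + h) ⊆ I01 := fun s hs ↦
          ⟨ht.1.trans hs.1.le, hs.2.trans (by linarith [ht.2])⟩
        have h1 : ∫⁻ s in Ioc t (t + h), F s = ∫⁻ s in Ioc t (t + h), G s :=
          lintegral_congr_ae (ae_restrict_of_ae_restrict_of_subset hsub hF.ae_eq_mk)
        have h2 := (measurePreserving_add_left volume t).setLIntegral_comp_preimage
          (measurableSet_Ioc (a := t) (b := t + h)) hG
        simp only [preimage_const_add_Ioc, sub_self, add_sub_cancel_left] at h2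
        simp only [h1, h2]
    _ = ∫⁻ s in Ioc 0 h, ∫⁻ t in Icc 0 (1 - h), G (t + s) :=
        lintegral_lintegral_swap (hG.comp (measurable_fst.add measurable_snd)).aemeasurable
    _ ≤ ∫⁻ _ in Ioc 0 h, ∫⁻ t in I01, F t := by
        refine setLIntegral_mono measurable_const fun s hs ↦ ?_
        have h2 := (measurePreserving_add_right volume s).setLIntegral_comp_preimage
          (measurableSet_Icc (a := s) (b := 1 - h + s)) hG
        simp only [preimage_add_const_Icc, sub_self, add_sub_cancel_right] at h2
        rw [h2, lintegral_congr_ae hF.ae_eq_mk]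
        exact lintegral_mono_set (Icc_subset_Icc hs.1.le (by linarith [hs.2]))
    _ = ENNReal.ofReal h * ∫⁻ t in I01, F t := by
        rw [setLIntegral_const, Real.volume_Ioc, sub_zero, mul_comm]

lemma LipschitzWith.integral_deriv_eq_sub {V : Type*} [NormedAddCommGroup V] [NormedSpace ℝ V]
    [FiniteDimensional ℝ V] {K : NNReal} {f : ℝ → V} (hf : LipschitzWith K f) (a b : ℝ) :
    ∫ x in a..b, deriv f x = f b - f a := by
  have : CompleteSpace V := FiniteDimensional.complete ℝ V
  have hmeas : AEStronglyMeasurable (deriv f) volume :=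
    (stronglyMeasurable_deriv f).aestronglyMeasurable
  have hbound (x : ℝ) : ‖deriv f x‖ ≤ K := norm_deriv_le_of_lipschitz hf
  have hint (c d : ℝ) : IntervalIntegrable (deriv f) volume c d :=
    (intervalIntegrable_const (c := (K : ℝ))).mono_fun hmeas.restrict
      (ae_of_all _ fun x ↦ by simpa using hbound x)
  have hlip : LipschitzWith K fun x ↦ ∫ t in a..x, deriv f t :=
    LipschitzWith.of_dist_le_mul fun x y ↦ by
      rw [dist_eq_norm, intervalIntegral.integral_interval_sub_left (hint _ _) (hint _ _),
        Real.dist_eq]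
      exact intervalIntegral.norm_integral_le_of_norm_le_const fun t _ ↦ hbound t
  have hac := (hf.sub hlip).lipschitzOnWith (s := uIcc a b) |>.absolutelyContinuousOnInterval
  obtain ⟨C, hC⟩ := hac.const_of_ae_hasDerivAt_zero <| by
    filter_upwards [hf.ae_differentiableAt_real, (hint a b).ae_hasDerivAt_integral]
      with x hx₁ hx₂ hx₃
    simpa using! hx₁.hasDerivAt.sub (hx₂ hx₃ a left_mem_uIcc)
  have ha := hC a left_mem_uIcc
  have hb := hC b right_mem_uIcc
  simp only [intervalIntegral.integral_same, sub_zero] at ha hb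
  rw [ha, ← hb, sub_sub_cancel]

/-- The integral of `lambdaStar` along the difference quotients of `φ` with step `h`. -/
def incrementEnergy (R h : ℝ) (φ : PathSp) : ℝ≥0∞ :=
  ∫⁻ t in Icc 0 (1 - h), lambdaStar R
    (h⁻¹ • (IccExtend zero_le_one φ (t + h) - IccExtend zero_le_one φ t))

lemma Represents.sub_eq_integral {φ : PathSp} {g : ℝ → E2} (hg : Represents φ g) {s t : ℝ}
    (hs : s ∈ I01) (ht : t ∈ I01) :
    φ ⟨t, ht⟩ - φ ⟨s, hs⟩ = ∫ r in s..t, g r := by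
  have hint {a b : ℝ} (ha : a ∈ I01) (hb : b ∈ I01) : IntervalIntegrable g volume a b :=
    (hg.1.mono_set (uIcc_subset_Icc ha hb)).intervalIntegrable
  have h0 : (0 : ℝ) ∈ I01 := pt0.2
  rw [hg.2 ⟨t, ht⟩, hg.2 ⟨s, hs⟩, add_sub_add_left_eq_sub,
    intervalIntegral.integral_interval_sub_left (hint h0 ht) (hint h0 hs)]

lemma Represents.aemeasurable_lambdaStar {φ : PathSp} {g : ℝ → E2} (hg : Represents φ g) (R : ℝ) :
    AEMeasurable (fun t ↦ lambdaStar R (g t)) (volume.restrict I01) :=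
  (measurable_lambdaStar R).comp_aemeasurable hg.1.aemeasurable

lemma Represents.incrementEnergy_le {φ : PathSp} {g : ℝ → E2} (hg : Represents φ g) (R : ℝ)
    {h : ℝ} (hh : 0 < h) :
    incrementEnergy R h φ ≤ ∫⁻ t in I01, lambdaStar R (g t) := by
  have hjensen : ∀ t ∈ Icc 0 (1 - h), lambdaStar R
      (h⁻¹ • (IccExtend zero_le_one φ (t + h) - IccExtend zero_le_one φ t)) ≤
      ENNReal.ofReal h⁻¹ * ∫⁻ s in Ioc t (t + h), lambdaStar R (g s) := fun t ht ↦ by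
    have ht0 : t ∈ I01 := ⟨ht.1, by linarith [ht.2]⟩
    have ht1 : t + h ∈ I01 := ⟨by linarith [ht.1], by linarith [ht.2]⟩
    have hsub : Ioc t (t + h) ⊆ I01 := fun s hs ↦ ⟨ht.1.trans hs.1.le, hs.2.trans ht1.2⟩
    set μ : Measure ℝ := ENNReal.ofReal h⁻¹ • volume.restrict (Ioc t (t + h)) with hμ
    have hprob : IsProbabilityMeasure μ := ⟨by
      rw [hμ, Measure.smul_apply, Measure.restrict_apply_univ, Real.volume_Ioc,
        add_sub_cancel_left, smul_eq_mul, ← ENNReal.ofReal_mul (by positivity),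
        inv_mul_cancel₀ hh.ne', ENNReal.ofReal_one]⟩
    have hgμ : Integrable g μ :=
      Integrable.smul_measure (hg.1.mono_set hsub) ENNReal.ofReal_ne_top
    have hj := lambdaStar_integral_le R hgμ
    rw [IccExtend_of_mem _ _ ht0, IccExtend_of_mem _ _ ht1, hg.sub_eq_integral,
      intervalIntegral.integral_of_le (by linarith)]
    rwa [hμ, integral_smul_measure, lintegral_smul_measure,
      ENNReal.toReal_ofReal (by positivity)] at hj
  calc incrementEnergy R h φ
      ≤ ∫⁻ t in Icc 0 (1 - h), ENNReal.ofReal h⁻¹ * ∫⁻ s in Ioc t (t + h), lambdaStar R (g s) :=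
        setLIntegral_mono' measurableSet_Icc hjensen
    _ = ENNReal.ofReal h⁻¹ *
          ∫⁻ t in Icc 0 (1 - h), ∫⁻ s in Ioc t (t + h), lambdaStar R (g s) :=
        lintegral_const_mul' _ _ ENNReal.ofReal_ne_top
    _ ≤ ENNReal.ofReal h⁻¹ * (ENNReal.ofReal h * ∫⁻ t in I01, lambdaStar R (g t)) := by
        gcongr
        exact lintegral_lintegral_window_le (hg.aemeasurable_lambdaStar R) h
    _ = ∫⁻ t in I01, lambdaStar R (g t) := by
        rw [← mul_assoc, ← ENNReal.ofReal_mul (by positivity), inv_mul_cancel₀ hh.ne',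
          ENNReal.ofReal_one, one_mul]

lemma incrementEnergy_le_rateFun (R : ℝ) (E : Set E2) {h : ℝ} (hh : 0 < h) (φ : PathSp) :
    incrementEnergy R h φ ≤ rateFun R E φ :=
  le_iInf₂ fun _ hg ↦ hg.1.incrementEnergy_le R hh

lemma continuous_iccExtend_path (φ : PathSp) : Continuous (IccExtend zero_le_one φ) :=
  φ.continuous.Icc_extend'

lemma measurable_lambdaStar_increment (R h : ℝ) (φ : PathSp) : Measurable fun t ↦ lambdaStar R
    (h⁻¹ • (IccExtend zero_le_one φ (t + h) - IccExtend zero_le_one φ t)) := by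
  have := continuous_iccExtend_path φ
  exact (measurable_lambdaStar R).comp (by fun_prop : Continuous _).measurable

lemma lowerSemicontinuous_incrementEnergy (R h : ℝ) :
    LowerSemicontinuous (incrementEnergy R h) := by
  refine lowerSemicontinuous_iff_le_liminf.2 fun φ ↦ ?_
  refine le_trans (lintegral_mono fun t ↦ ?_)
    (lintegral_liminf_le fun ψ ↦ measurable_lambdaStar_increment R h ψ)
  have hcont : Continuous fun ψ : PathSp ↦
      h⁻¹ • (IccExtend zero_le_one ψ (t + h) - IccExtend zero_le_one ψ t) := by
    simp only [IccExtend, Function.comp_apply]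
    fun_prop
  exact ((lowerSemicontinuous_lambdaStar R).comp hcont).le_liminf φ

lemma lintegral_lambdaStar_deriv_le {R : ℝ} {φ : PathSp} {K : NNReal}
    (hφ : LipschitzWith K (IccExtend zero_le_one φ)) {c : ℝ≥0∞}
    (hc : ∀ h > 0, incrementEnergy R h φ ≤ c) :
    ∫⁻ t in I01, lambdaStar R (deriv (IccExtend zero_le_one φ) t) ≤ c := by
  set ψ : ℝ → E2 := IccExtend zero_le_one φ
  set f : ℝ → ℝ → ℝ≥0∞ := fun h ↦
    (Icc 0 (1 - h)).indicator fun t ↦ lambdaStar R (h⁻¹ • (ψ (t + h) - ψ t)) with hf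
  have hmeas (h : ℝ) : Measurable (f h) :=
    (measurable_lambdaStar_increment R h φ).indicator measurableSet_Icc
  have hlim : ∀ᵐ t ∂(volume.restrict I01),
      lambdaStar R (deriv ψ t) ≤ liminf (fun h ↦ f h t) (𝓝[>] 0) := by
    filter_upwards [ae_restrict_mem measurableSet_Icc,
      ae_restrict_of_ae hφ.ae_differentiableAt_real,
      ae_restrict_of_ae (Measure.ae_ne volume (1 : ℝ))] with t ht hdiff ht1
    have hslope : Tendsto (fun h ↦ h⁻¹ • (ψ (t + h) - ψ t)) (𝓝[>] 0) (𝓝 (deriv ψ t)) :=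
      hdiff.hasDerivAt.tendsto_slope_zero_right
    have hev : ∀ᶠ h in 𝓝[>] (0 : ℝ), lambdaStar R (h⁻¹ • (ψ (t + h) - ψ t)) = f h t := by
      filter_upwards [nhdsWithin_le_nhds (Iio_mem_nhds (sub_pos.2 (ht.2.lt_of_ne ht1)))]
        with h hh
      have hmem : t ∈ Icc 0 (1 - h) := ⟨ht.1, by linarith [mem_Iio.1 hh]⟩
      simp only [hf, indicator_of_mem hmem]
    calc lambdaStar R (deriv ψ t) ≤ liminf (lambdaStar R) (𝓝 (deriv ψ t)) :=
          (lowerSemicontinuous_lambdaStar R).le_liminf _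
      _ ≤ liminf (fun h ↦ lambdaStar R (h⁻¹ • (ψ (t + h) - ψ t))) (𝓝[>] 0) :=
          hslope.liminf_le_liminf_comp
      _ = liminf (fun h ↦ f h t) (𝓝[>] 0) := liminf_congr hev
  calc ∫⁻ t in I01, lambdaStar R (deriv ψ t)
      ≤ ∫⁻ t in I01, liminf (fun h ↦ f h t) (𝓝[>] 0) := lintegral_mono_ae hlim
    _ ≤ liminf (fun h ↦ ∫⁻ t in I01, f h t) (𝓝[>] 0) := lintegral_liminf_le hmeas
    _ ≤ c := by
      refine liminf_le_of_frequently_le' (Eventually.frequently ?_)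
      filter_upwards [self_mem_nhdsWithin] with h hh
      refine le_trans ?_ (hc h hh)
      refine (setLIntegral_le_lintegral _ _).trans_eq ?_
      exact lintegral_indicator measurableSet_Icc _

/-- The `R`-Lipschitz paths started in the closure of `E`. -/
def lipschitzPaths (R : ℝ) (E : Set E2) : Set PathSp :=
  {φ | φ pt0 ∈ closure E ∧ ∀ s t : I01, dist (φ s) (φ t) ≤ R * dist s t}

lemma mem_lipschitzPaths_of_rateFun_ne_top {R : ℝ} (hR : 0 < R) {E : Set E2} {φ : PathSp}
    (hφ : rateFun R E φ ≠ ∞) : φ ∈ lipschitzPaths R E := by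
  obtain ⟨g, ⟨hg, h0⟩, hfin⟩ : ∃ g, (Represents φ g ∧ φ pt0 ∈ closure E) ∧
      ∫⁻ t in I01, lambdaStar R (g t) < ∞ := by
    simpa only [rateFun, iInf_lt_iff, exists_prop] using hφ.lt_top
  have hbound : ∀ᵐ t, t ∈ I01 → ‖g t‖ ≤ R := by
    rw [← ae_restrict_iff' measurableSet_Icc]
    filter_upwards [ae_lt_top' (hg.aemeasurable_lambdaStar R) hfin.ne] with t ht
    exact norm_le_of_lambdaStar_ne_top hR ht.ne
  refine ⟨h0, fun s t ↦ ?_⟩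
  rw [dist_comm, dist_eq_norm, hg.sub_eq_integral s.2 t.2, dist_comm s t, Subtype.dist_eq,
    Real.dist_eq]
  refine intervalIntegral.norm_integral_le_of_norm_le_const_ae ?_
  filter_upwards [hbound] with r hr hmem
  exact hr (uIcc_subset_Icc s.2 t.2 (uIoc_subset_uIcc hmem))

lemma isCompact_lipschitzPaths (R : ℝ) {E : Set E2} (hE : Bornology.IsBounded E) :
    IsCompact (lipschitzPaths R E) := by
  apply ArzelaAscoli.isCompact_of_equicontinuous
  · set S : Set (I01 → E2) :=
      {f | f pt0 ∈ closure E ∧ ∀ s t : I01, dist (f s) (f t) ≤ R * dist s t}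
    have himage : ContinuousMap.toFun '' lipschitzPaths R E = S := by
      ext f
      refine ⟨?_, fun hf ↦ ?_⟩
      · rintro ⟨φ, hφ, rfl⟩
        exact hφ
      · have hlip : LipschitzWith R.toNNReal f := LipschitzWith.of_dist_le_mul fun s t ↦
          (hf.2 s t).trans (by gcongr; exact Real.le_coe_toNNReal R)
        exact ⟨⟨f, hlip.continuous⟩, hf, rfl⟩
    have hclosed : IsClosed S := by
      have hinter : S = (fun f ↦ f pt0) ⁻¹' closure E ∩
          ⋂ s, ⋂ t, {f | dist (f s) (f t) ≤ R * dist s t} := by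
        ext f
        simp only [mem_inter_iff, mem_iInter]
        rfl
      rw [hinter]
      exact (isClosed_closure.preimage (continuous_apply pt0)).inter <|
        isClosed_iInter fun s ↦ isClosed_iInter fun t ↦ isClosed_le (by fun_prop) continuous_const
    obtain ⟨M, hM⟩ := hE.closure.exists_norm_le
    rw [himage]
    refine IsCompact.of_isClosed_subset
      (isCompact_univ_pi fun t : I01 ↦ isCompact_closedBall (0 : E2) (R * dist t pt0 + M))
      hclosed fun f hf t _ ↦ ?_
    rw [mem_closedBall_zero_iff]
    calc ‖f t‖ ≤ ‖f t - f pt0‖ + ‖f pt0‖ := norm_le_norm_sub_add _ _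
      _ ≤ R * dist t pt0 + M := by
        rw [← dist_eq_norm]
        exact add_le_add (hf.2 t pt0) (hM _ hf.1)
  · refine LipschitzWith.uniformEquicontinuous (fun φ : lipschitzPaths R E ↦ (φ : I01 → E2))
      R.toNNReal (fun φ ↦ ?_) |>.equicontinuous
    exact LipschitzWith.of_dist_le_mul fun s t ↦
      (φ.2.2 s t).trans (by gcongr; exact Real.le_coe_toNNReal R)

lemma rateFun_le_of_incrementEnergy_le {R : ℝ} {E : Set E2} {φ : PathSp}
    (hφ : φ ∈ lipschitzPaths R E) {c : ℝ≥0∞} (hc : ∀ h > 0, incrementEnergy R h φ ≤ c) :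
    rateFun R E φ ≤ c := by
  have hlip : LipschitzWith R.toNNReal (IccExtend zero_le_one φ) := by
    have hφ' : LipschitzWith R.toNNReal φ := LipschitzWith.of_dist_le_mul fun s t ↦
      (hφ.2 s t).trans (by gcongr; exact Real.le_coe_toNNReal R)
    simpa only [mul_one] using! hφ'.comp (LipschitzWith.projIcc zero_le_one)
  refine (iInf₂_le (deriv (IccExtend zero_le_one φ)) ⟨⟨?_, fun t ↦ ?_⟩, hφ.1⟩).trans
    (lintegral_lambdaStar_deriv_le hlip hc)
  · exact Measure.integrableOn_of_bounded measure_Icc_lt_top.ne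
      (stronglyMeasurable_deriv _).aestronglyMeasurable
      (ae_of_all _ fun t ↦ norm_deriv_le_of_lipschitz hlip)
  · rw [hlip.integral_deriv_eq_sub, IccExtend_of_mem _ _ t.2, IccExtend_of_mem _ _ (x := 0) pt0.2]
    exact (add_sub_cancel _ _).symm

lemma setOf_rateFun_le {R : ℝ} (hR : 0 < R) (E : Set E2) {c : ℝ≥0∞} (hc : c ≠ ∞) :
    {φ | rateFun R E φ ≤ c} = lipschitzPaths R E ∩ ⋂ h > 0, {φ | incrementEnergy R h φ ≤ c} := by
  ext φ
  simp only [mem_inter_iff, mem_iInter]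
  exact ⟨fun hφ ↦ ⟨mem_lipschitzPaths_of_rateFun_ne_top hR (ne_top_of_le_ne_top hc hφ),
    fun h hh ↦ (incrementEnergy_le_rateFun R E hh φ).trans hφ⟩,
    fun hφ ↦ rateFun_le_of_incrementEnergy_le hφ.1 hφ.2⟩

lemma isCompact_setOf_rateFun_le {R : ℝ} (hR : 0 < R) {E : Set E2} (hE : Bornology.IsBounded E)
    {c : ℝ≥0∞} (hc : c ≠ ∞) : IsCompact {φ | rateFun R E φ ≤ c} := by
  rw [setOf_rateFun_le hR E hc]
  exact (isCompact_lipschitzPaths R hE).inter_right <| isClosed_biInter fun h _ ↦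
    (lowerSemicontinuous_incrementEnergy R h).isClosed_preimage c

/-- The rate function `I_E` is a good rate function on `C([0,1],ℝ²)` with the
sup metric: it is lower semicontinuous and its sublevel sets are compact. -/
theorem statement8 (R : ℝ) (hR : 0 < R) (E : Set E2) (hE : Bornology.IsBounded E) :
    LowerSemicontinuous (rateFun R E) ∧
    ∀ α : ℝ, 0 ≤ α → IsCompact {φ : PathSp | rateFun R E φ ≤ ENNReal.ofReal α} := by
  refine ⟨lowerSemicontinuous_iff_isClosed_preimage.2 fun c ↦ ?_,
    fun α _ ↦ isCompact_setOf_rateFun_le hR hE ENNReal.ofReal_ne_top⟩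
  rcases eq_or_ne c ∞ with rfl | hc
  · simp
  · exact (isCompact_setOf_rateFun_le hR hE hc).isClosed
end
end
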